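/- arXiv:1810.11386 — 3 statements merged into one kernel-verified Lean document; each statement's English description precedes it below -/
import Mathlib

section
/- If DC holds, then for every integer k ≥ 3 one has L_k^2 ≥ L_{k−1} · L_{k+1}, where the inequality and product are taken in the extended nonnegative reals [0, +∞]. -/
open Filter Topology
open scoped ENNReal

/-- `N` has the Ramsey property for the tuple `k`: every `r`-coloring of the
edges of the complete graph on `N` vertices admits a color `i` and a set of
`k i` vertices all of whose connecting edges have color `i`. -/
def ramseyProp {r : ℕ} (k : Fin r → ℕ) (N : ℕ) : Prop :=
  ∀ c : Sym2 (Fin N) → Fin r, ∃ i : Fin r, ∃ S : Finset (Fin N),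
    S.card = k i ∧ ∀ u ∈ S, ∀ v ∈ S, u ≠ v → c s(u, v) = i

/-- The multicolor Ramsey number `R(k 0, …, k (r-1))`: the least positive `N`
with the Ramsey property. -/
noncomputable def multiRamsey {r : ℕ} (k : Fin r → ℕ) : ℕ :=
  sInf {N | 0 < N ∧ ramseyProp k N}

/-- The diagonal multicolor Ramsey number `R_r(k)`. -/
noncomputable def diagRamsey (r k : ℕ) : ℕ :=
  multiRamsey (fun _ : Fin r => k)

/-- DC, the "decreasing conjecture". -/
def DC : Prop :=
  ∀ (r : ℕ), 2 ≤ r → ∀ k : Fin r → ℕ, (∀ l, 2 ≤ k l) →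
    ∀ i j : Fin r, i ≠ j → 3 ≤ k i → k i ≤ k j →
      multiRamsey (fun l => if l = i then k i - 1 else if l = j then k j + 1 else k l)
        ≤ multiRamsey k

/-- The finite multicolor Ramsey theorem, for colorings of the pairs of an arbitrary type restricted
to a large finite set. -/
theorem exists_monochromatic_of_card_le {r : ℕ} (k : Fin r → ℕ) :
    ∃ N, 0 < N ∧ ∀ (V : Type) (T : Finset V) (c : Sym2 V → Fin r), N ≤ T.card →
      ∃ i, ∃ S ⊆ T, S.card = k i ∧ ∀ u ∈ S, ∀ v ∈ S, u ≠ v → c s(u, v) = i := by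
  classical
  induction hn : ∑ i, k i using Nat.strong_induction_on generalizing k with
  | _ n ih =>
  by_cases h0 : ∃ i, k i = 0
  · obtain ⟨i, hi⟩ := h0
    exact ⟨1, one_pos, fun V T c _ => ⟨i, ∅, by simp, by simp [hi], by simp⟩⟩
  push Not at h0
  have hdec (i : Fin r) : ∑ l, Function.update k i (k i - 1) l < n := by
    rw [← hn]
    refine Finset.sum_lt_sum (fun l _ => ?_) ⟨i, Finset.mem_univ i, ?_⟩
    · by_cases hl : l = i
      · subst hl; simp
      · simp [hl]
    · have := h0 i
      simp
      omega
  choose N hNpos hN using fun i => ih _ (hdec i) _ rfl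
  refine ⟨1 + ∑ i, N i, by omega, fun V T c hT => ?_⟩
  obtain ⟨v, hv⟩ : T.Nonempty := Finset.card_pos.mp (by omega)
  have hcard : ∑ i, N i ≤ ∑ i, ((T.erase v).filter fun u => c s(v, u) = i).card := by
    rw [← Finset.card_eq_sum_card_fiberwise (fun _ _ => Finset.mem_coe.mpr (Finset.mem_univ _)),
      Finset.card_erase_of_mem hv]
    omega
  obtain ⟨i, -, hi⟩ := Finset.exists_le_of_sum_le ⟨c s(v, v), Finset.mem_univ _⟩ hcard
  obtain ⟨j, S, hST, hS, hmono⟩ := hN i V _ c hi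
  have hST' : S ⊆ T := fun x hx =>
    Finset.mem_of_mem_erase (Finset.mem_filter.mp (hST hx)).1
  by_cases hj : j = i
  · subst hj
    have hcol : ∀ u ∈ S, c s(v, u) = j := fun u hu => (Finset.mem_filter.mp (hST hu)).2
    have hvS : v ∉ S := fun h => by simpa using hST h
    refine ⟨j, insert v S, Finset.insert_subset hv hST', ?_, ?_⟩
    · have := h0 j
      rw [Finset.card_insert_of_notMem hvS, hS]
      simp
      omega
    · intro a ha b hb hab
      rcases Finset.mem_insert.mp ha with rfl | haS <;>
        rcases Finset.mem_insert.mp hb with rfl | hbS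
      · exact absurd rfl hab
      · exact hcol b hbS
      · rw [Sym2.eq_swap]; exact hcol a haS
      · exact hmono a haS b hbS hab
  · exact ⟨j, S, hST', by simpa [hj] using hS, hmono⟩

theorem multiRamsey_mem {r : ℕ} (k : Fin r → ℕ) :
    0 < multiRamsey k ∧ ramseyProp k (multiRamsey k) := by
  obtain ⟨N, hpos, hN⟩ := exists_monochromatic_of_card_le k
  refine Nat.sInf_mem (s := {N | 0 < N ∧ ramseyProp k N}) ⟨N, hpos, fun c => ?_⟩
  obtain ⟨i, S, -, hS⟩ := hN _ Finset.univ c (by simp)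
  exact ⟨i, S, hS⟩

theorem ramseyProp.mono {r : ℕ} {k : Fin r → ℕ} {M N : ℕ} (h : ramseyProp k M) (hMN : M ≤ N) :
    ramseyProp k N := by
  intro c
  obtain ⟨i, S, hS, hmono⟩ := h fun e => c (e.map (Fin.castLE hMN))
  refine ⟨i, S.map (Fin.castLEEmb hMN), by simpa using hS, ?_⟩
  simp only [Finset.mem_map]
  rintro _ ⟨u, hu, rfl⟩ _ ⟨v, hv, rfl⟩ huv
  exact hmono u hu v hv fun h => huv (by rw [h])

theorem lt_multiRamsey {r : ℕ} {k : Fin r → ℕ} {N : ℕ} (h : ¬ ramseyProp k N) :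
    N < multiRamsey k :=
  not_le.mp fun hle => h ((multiRamsey_mem k).2.mono hle)

theorem not_ramseyProp_of_lt {r : ℕ} {k : Fin r → ℕ} {N : ℕ} (hpos : 0 < N)
    (h : N < multiRamsey k) : ¬ ramseyProp k N :=
  fun hN => Nat.notMem_of_lt_sInf h ⟨hpos, hN⟩

/-- The lexicographic product of two colorings with disjoint palettes. -/
theorem not_ramseyProp_append {r s : ℕ} {k : Fin r → ℕ} {l : Fin s → ℕ} {M N : ℕ}
    (hM : ¬ ramseyProp k M) (hN : ¬ ramseyProp l N) :
    ¬ ramseyProp (Fin.append k l) (M * N) := by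
  classical
  simp only [ramseyProp, not_forall] at hM hN
  obtain ⟨c, hc⟩ := hM
  obtain ⟨d, hd⟩ := hN
  intro h
  let p : Fin (M * N) → Fin M := fun x => (finProdFinEquiv.symm x).1
  let q : Fin (M * N) → Fin N := fun x => (finProdFinEquiv.symm x).2
  have hpq : ∀ u v, p u = p v → q u = q v → u = v := fun u v h₁ h₂ =>
    finProdFinEquiv.symm.injective (Prod.ext h₁ h₂)
  obtain ⟨i, S, hS, hmono⟩ := h fun e =>
    if (e.map p).IsDiag then Fin.natAdd r (d (e.map q)) else Fin.castAdd s (c (e.map p))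
  simp only [Sym2.map_mk, Sym2.mk_isDiag_iff] at hmono
  induction i using Fin.addCases with
  | left i =>
    have hne : ∀ u ∈ S, ∀ v ∈ S, u ≠ v → p u ≠ p v := by
      intro u hu v hv huv hp
      have := hmono u hu v hv huv
      rw [if_pos hp] at this
      have := congrArg Fin.val this
      simp at this
      omega
    refine hc ⟨i, S.image p, ?_, ?_⟩
    · rw [Finset.card_image_of_injOn, hS, Fin.append_left]
      exact fun u hu v hv huv => by_contra fun hn => hne u hu v hv hn huv
    · simp only [Finset.mem_image]
      rintro _ ⟨u, hu, rfl⟩ _ ⟨v, hv, rfl⟩ huv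
      have := hmono u hu v hv fun h => huv (by rw [h])
      rw [if_neg huv] at this
      exact Fin.castAdd_injective _ _ this
  | right i =>
    have heq : ∀ u ∈ S, ∀ v ∈ S, u ≠ v → p u = p v := by
      intro u hu v hv huv
      by_contra hp
      have := hmono u hu v hv huv
      rw [if_neg hp] at this
      have := congrArg Fin.val this
      simp at this
      omega
    refine hd ⟨i, S.image q, ?_, ?_⟩
    · rw [Finset.card_image_of_injOn, hS, Fin.append_right]
      exact fun u hu v hv huv => by_contra fun hn => hn (hpq u v (heq u hu v hv hn) huv)
    · simp only [Finset.mem_image]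
      rintro _ ⟨u, hu, rfl⟩ _ ⟨v, hv, rfl⟩ huv
      have huv' : u ≠ v := fun h => huv (by rw [h])
      have := hmono u hu v hv huv'
      rw [if_pos (heq u hu v hv huv')] at this
      exact Fin.natAdd_injective _ _ this

theorem sub_one_mul_sub_one_lt_multiRamsey_append {r s : ℕ} (k : Fin r → ℕ) (l : Fin s → ℕ) :
    (multiRamsey k - 1) * (multiRamsey l - 1) < multiRamsey (Fin.append k l) := by
  rcases Nat.eq_zero_or_pos (multiRamsey k - 1) with hk | hk
  · rw [hk, zero_mul]; exact (multiRamsey_mem _).1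
  rcases Nat.eq_zero_or_pos (multiRamsey l - 1) with hl | hl
  · rw [hl, mul_zero]; exact (multiRamsey_mem _).1
  exact lt_multiRamsey (not_ramseyProp_append (not_ramseyProp_of_lt hk (by omega))
    (not_ramseyProp_of_lt hl (by omega)))

theorem two_le_diagRamsey {r k : ℕ} (hr : 1 ≤ r) (hk : 2 ≤ k) : 2 ≤ diagRamsey r k := by
  refine lt_multiRamsey (N := 1) fun h => ?_
  obtain ⟨i, S, hS, -⟩ := h fun _ => ⟨0, hr⟩
  have hcard := S.card_le_univ
  simp only [hS, Fintype.card_fin] at hcard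
  omega

/-- Moving one unit between `m` disjoint pairs of colors does not increase the Ramsey number. -/
theorem DC.multiRamsey_shift_le (hDC : DC) {k : ℕ} (hk : 3 ≤ k) (r m : ℕ) (hm : m ≤ r) :
    multiRamsey (fun l : Fin (r + r) => if l.val < m then k - 1 else
      if r ≤ l.val ∧ l.val < r + m then k + 1 else k) ≤ diagRamsey (r + r) k := by
  induction m with
  | zero =>
    refine le_of_eq (congrArg multiRamsey (funext fun l => ?_))
    rw [if_neg (by omega), if_neg (by omega)]
  | succ m ih =>
    refine le_trans (le_of_eq ?_) ((hDC (r + r) (by omega) _ ?_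
      (⟨m, by omega⟩ : Fin (r + r)) ⟨r + m, by omega⟩ ?_ ?_ ?_).trans (ih (by omega)))
    · refine congrArg multiRamsey (funext fun l => ?_)
      simp only [Fin.ext_iff]
      split_ifs <;> omega
    · intro l
      split_ifs <;> omega
    · simp only [ne_eq, Fin.ext_iff]
      omega
    · dsimp only
      split_ifs <;> omega
    · dsimp only
      split_ifs <;> omega

theorem DC.diagRamsey_mul_le (hDC : DC) {k : ℕ} (hk : 3 ≤ k) {r : ℕ} (hr : 1 ≤ r) :
    diagRamsey r (k - 1) * diagRamsey r (k + 1) ≤ 4 * diagRamsey (r + r) k := by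
  have hshift := hDC.multiRamsey_shift_le hk r r le_rfl
  have happend : (fun l : Fin (r + r) => if l.val < r then k - 1 else
      if r ≤ l.val ∧ l.val < r + r then k + 1 else k) =
      Fin.append (fun _ : Fin r => k - 1) (fun _ : Fin r => k + 1) := by
    funext l
    induction l using Fin.addCases with
    | left i => simp
    | right i =>
      rw [Fin.append_right]
      simp
  rw [happend] at hshift
  have hprod := (sub_one_mul_sub_one_lt_multiRamsey_append
    (fun _ : Fin r => k - 1) (fun _ : Fin r => k + 1)).le.trans hshift
  change (diagRamsey r (k - 1) - 1) * (diagRamsey r (k + 1) - 1) ≤ _ at hprod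
  have ha := two_le_diagRamsey hr (show 2 ≤ k - 1 by omega)
  have hb := two_le_diagRamsey hr (show 2 ≤ k + 1 by omega)
  calc _ ≤ (2 * (diagRamsey r (k - 1) - 1)) * (2 * (diagRamsey r (k + 1) - 1)) :=
        Nat.mul_le_mul (by omega) (by omega)
    _ = 4 * ((diagRamsey r (k - 1) - 1) * (diagRamsey r (k + 1) - 1)) := by ring
    _ ≤ _ := Nat.mul_le_mul_left 4 hprod

theorem one_le_of_tendsto_diagRamsey_rpow {j : ℕ} {x : ℝ≥0∞}
    (h : Tendsto (fun r : ℕ => (diagRamsey r j : ℝ≥0∞) ^ (1 / (r : ℝ))) atTop (𝓝 x)) :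
    1 ≤ x := by
  refine ge_of_tendsto h ?_
  filter_upwards [eventually_ge_atTop 1] with r hr
  have hpos : 1 ≤ diagRamsey r j := (multiRamsey_mem _).1
  exact ENNReal.one_le_rpow (by exact_mod_cast hpos) (by positivity)

/-- if DC holds then `L_k² ≥ L_{k−1} · L_{k+1}` in `[0, ∞]`,
where `L j` is the limit of `r ↦ R_r(j)^{1/r}` in `[0, ∞]`. -/
theorem stmt5 (hDC : DC) (L : ℕ → ℝ≥0∞)
    (hL : ∀ j, 2 ≤ j →
      Tendsto (fun r : ℕ => ((diagRamsey r j : ℝ≥0∞)) ^ (1 / (r : ℝ))) atTop (𝓝 (L j)))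
    (k : ℕ) (hk : 3 ≤ k) :
    L (k - 1) * L (k + 1) ≤ (L k) ^ 2 := by
  have hne : ∀ j, 2 ≤ j → L j ≠ 0 := fun j hj =>
    (one_pos.trans_le (one_le_of_tendsto_diagRamsey_rpow (hL j hj))).ne'
  have hleft := ENNReal.Tendsto.mul (hL (k - 1) (by omega)) (Or.inl (hne _ (by omega)))
    (hL (k + 1) (by omega)) (Or.inl (hne _ (by omega)))
  have hdouble : Tendsto (fun r : ℕ => r + r) atTop atTop :=
    tendsto_atTop_mono (fun r => Nat.le_add_left r r) tendsto_id
  have hsq := ENNReal.Tendsto.pow (n := 2) ((hL k (by omega)).comp hdouble)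
  have hfour : Tendsto (fun r : ℕ => (4 : ℝ≥0∞) ^ (1 / (r : ℝ))) atTop (𝓝 1) := by
    have h := ENNReal.tendsto_coe.mpr ((tendsto_const_nhds (x := (4 : NNReal))).nnrpow
      tendsto_one_div_atTop_nhds_zero_nat (Or.inl four_ne_zero))
    simpa [ENNReal.coe_rpow_of_ne_zero] using h
  have hright := ENNReal.Tendsto.mul hfour (Or.inl one_ne_zero) hsq (Or.inr ENNReal.one_ne_top)
  rw [one_mul] at hright
  refine le_of_tendsto_of_tendsto hleft hright ?_
  filter_upwards [eventually_ge_atTop 1] with r hr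
  have hr' : (r : ℝ) ≠ 0 := by positivity
  simp only [Function.comp_apply]
  rw [← ENNReal.rpow_mul_natCast, ← ENNReal.mul_rpow_of_nonneg _ _ (by positivity),
    show 1 / ((r + r : ℕ) : ℝ) * (2 : ℕ) = 1 / (r : ℝ) by push_cast; field_simp; norm_num,
    ← ENNReal.mul_rpow_of_nonneg _ _ (by positivity)]
  exact ENNReal.rpow_le_rpow (by exact_mod_cast hDC.diagRamsey_mul_le hk hr) (by positivity)
end

section
/- For all integers k ≥ 3 and r ≥ 1, one has R_r(2k − 1) − 1 ≥ 2^r · (R_r(k) − 1). -/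
open Filter Topology
open scoped ENNReal

/-- The finite multicolor Ramsey theorem, for subsets of an arbitrary type. -/
theorem exists_forall_card_le_exists_monochromatic {r : ℕ} [NeZero r] (k : Fin r → ℕ) :
    ∃ N : ℕ, ∀ (α : Type) (c : Sym2 α → Fin r) (S : Finset α), N ≤ S.card →
      ∃ i, ∃ T ⊆ S, T.card = k i ∧ ∀ u ∈ T, ∀ v ∈ T, u ≠ v → c s(u, v) = i := by
  classical
  induction hn : ∑ i, k i using Nat.strong_induction_on generalizing k with
  | _ n ih =>
  by_cases h0 : ∃ i, k i = 0
  · obtain ⟨i, hi⟩ := h0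
    exact ⟨0, fun α c S _ => ⟨i, ∅, by simp, by simp [hi], by simp⟩⟩
  push Not at h0
  have decr (i : Fin r) : ∑ j, Function.update k i (k i - 1) j < n := by
    rw [← hn]
    refine Finset.sum_lt_sum (fun j _ => ?_) ⟨i, Finset.mem_univ i, ?_⟩
    · by_cases hj : j = i
      · subst hj
        simp
      · simp [hj]
    · have := h0 i
      simp only [Function.update_self]
      omega
  choose N hN using fun i => ih _ (decr i) _ rfl
  refine ⟨1 + ∑ i, N i, fun α c S hS => ?_⟩
  obtain ⟨v, hv⟩ : S.Nonempty := Finset.card_pos.mp (by omega)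
  have hsum : ∑ i, N i ≤ ∑ i, ((S.erase v).filter fun u => c s(v, u) = i).card := by
    rw [← Finset.card_eq_sum_card_fiberwise (fun _ _ => Finset.mem_coe.mpr (Finset.mem_univ _)),
      Finset.card_erase_of_mem hv]
    omega
  obtain ⟨i, -, hi⟩ := Finset.exists_le_of_sum_le Finset.univ_nonempty hsum
  obtain ⟨j, T, hTS, hcard, hT⟩ := hN i α c _ hi
  have hTv : ∀ u ∈ T, u ≠ v ∧ u ∈ S ∧ c s(v, u) = i := fun u hu => by
    simpa [and_assoc] using hTS hu
  by_cases hj : j = i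
  · subst hj
    refine ⟨j, insert v T, ?_, ?_, ?_⟩
    · exact Finset.insert_subset hv fun u hu => (hTv u hu).2.1
    · rw [Finset.card_insert_of_notMem fun h => (hTv v h).1 rfl, hcard]
      have := h0 j
      simp only [Function.update_self]
      omega
    · intro u hu w hw huw
      rcases Finset.mem_insert.mp hu with rfl | hu' <;> rcases Finset.mem_insert.mp hw with rfl | hw'
      · exact absurd rfl huw
      · exact (hTv w hw').2.2
      · rw [Sym2.eq_swap]
        exact (hTv u hu').2.2
      · exact hT u hu' w hw' huw
  · exact ⟨j, T, fun u hu => (hTv u hu).2.1, by simpa [hj] using hcard, hT⟩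

/-- The multicolor Ramsey number is itself a Ramsey bound. -/
theorem ramseyProp_multiRamsey {r : ℕ} [NeZero r] (k : Fin r → ℕ) :
    ramseyProp k (multiRamsey k) := by
  obtain ⟨N, hN⟩ := exists_forall_card_le_exists_monochromatic k
  have hmem : N + 1 ∈ {N | 0 < N ∧ ramseyProp k N} := by
    refine ⟨N.succ_pos, fun c => ?_⟩
    obtain ⟨i, T, -, hT⟩ := hN _ c Finset.univ (by simp)
    exact ⟨i, T, hT⟩
  exact (Nat.sInf_mem ⟨_, hmem⟩).2

/-- The Ramsey property passes to colorings of any finite type that is large enough. -/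
theorem ramseyProp.exists_monochromatic {r N : ℕ} {k : Fin r → ℕ} (h : ramseyProp k N)
    {V : Type*} [Fintype V] (hV : N ≤ Fintype.card V) (c : Sym2 V → Fin r) :
    ∃ i, ∃ S : Finset V, S.card = k i ∧ ∀ u ∈ S, ∀ v ∈ S, u ≠ v → c s(u, v) = i := by
  obtain ⟨e⟩ : Nonempty (Fin N ↪ V) :=
    Function.Embedding.nonempty_of_card_le (by simpa using hV)
  obtain ⟨i, S, hS, hc⟩ := h fun p => c (p.map e)
  refine ⟨i, S.map e, by simpa using hS, ?_⟩
  simp only [Finset.mem_map]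
  rintro _ ⟨u, hu, rfl⟩ _ ⟨v, hv, rfl⟩ huv
  exact hc u hu v hv fun h => huv (congrArg e h)

/-- Color a pair in `(Fin r → Bool) × α` by the first coordinate in which the Boolean vectors
differ, and by `c` when they agree. -/
def cubeColoring {r : ℕ} {α : Type*} (c : Sym2 α → Fin r) :
    Sym2 ((Fin r → Bool) × α) → Fin r :=
  Sym2.lift ⟨fun p q =>
    if h : (Finset.univ.filter fun i => p.1 i ≠ q.1 i).Nonempty then Finset.min' _ h
    else c s(p.2, q.2), fun p q => by simp only [ne_comm, Sym2.eq_swap]⟩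

theorem cubeColoring_of_eq {r : ℕ} {α : Type*} (c : Sym2 α → Fin r)
    {p q : (Fin r → Bool) × α} (h : p.1 = q.1) :
    cubeColoring c s(p, q) = c s(p.2, q.2) := by
  simp [cubeColoring, h]

theorem apply_cubeColoring_ne {r : ℕ} {α : Type*} (c : Sym2 α → Fin r)
    {p q : (Fin r → Bool) × α} (h : p.1 ≠ q.1) :
    p.1 (cubeColoring c s(p, q)) ≠ q.1 (cubeColoring c s(p, q)) := by
  have hne : (Finset.univ.filter fun i => p.1 i ≠ q.1 i).Nonempty := by
    obtain ⟨i, hi⟩ := Function.ne_iff.mp h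
    exact ⟨i, by simpa using hi⟩
  have hcol : cubeColoring c s(p, q) = Finset.min' _ hne := by
    simp only [cubeColoring, Sym2.lift_mk]
    exact dif_pos hne
  rw [hcol]
  exact (Finset.mem_filter.mp (Finset.min'_mem _ hne)).2

/-- A large monochromatic set of `cubeColoring c` yields one of `c` of half the size. -/
theorem exists_monochromatic_of_cubeColoring {r k : ℕ} {α : Type*} (c : Sym2 α → Fin r)
    (i : Fin r) (S : Finset ((Fin r → Bool) × α)) (hS : 2 * k - 1 ≤ S.card)
    (hc : ∀ u ∈ S, ∀ v ∈ S, u ≠ v → cubeColoring c s(u, v) = i) :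
    ∃ T : Finset α, T.card = k ∧ ∀ u ∈ T, ∀ v ∈ T, u ≠ v → c s(u, v) = i := by
  classical
  obtain ⟨b, hb⟩ : ∃ b : Bool, k ≤ (S.filter fun p => p.1 i = b).card := by
    by_contra! hlt
    have hsplit := Finset.card_filter_add_card_filter_not (s := S) fun p => p.1 i = true
    simp only [Bool.not_eq_true] at hsplit
    have := hlt true
    have := hlt false
    omega
  obtain ⟨T, hTS, hT⟩ := Finset.exists_subset_card_eq hb
  have hmem : ∀ p ∈ T, p ∈ S ∧ p.1 i = b := fun p hp => by simpa using hTS hp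
  have hfst : ∀ p ∈ T, ∀ q ∈ T, p.1 = q.1 := by
    intro p hp q hq
    by_contra hpq
    have hne := apply_cubeColoring_ne c hpq
    rw [hc p (hmem p hp).1 q (hmem q hq).1 fun h => hpq (congrArg Prod.fst h)] at hne
    exact hne ((hmem p hp).2.trans (hmem q hq).2.symm)
  refine ⟨T.image Prod.snd, ?_, ?_⟩
  · rw [Finset.card_image_of_injOn fun p hp q hq h => Prod.ext (hfst p hp q hq) h, hT]
  · simp only [Finset.mem_image]
    rintro _ ⟨p, hp, rfl⟩ _ ⟨q, hq, rfl⟩ hpq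
    rw [← cubeColoring_of_eq c (hfst p hp q hq)]
    exact hc p (hmem p hp).1 q (hmem q hq).1 fun h => hpq (congrArg Prod.snd h)

/-- `R_r(2k − 1) − 1 ≥ 2^r · (R_r(k) − 1)` for `k ≥ 3`, `r ≥ 1`. -/
theorem stmt10 (k r : ℕ) (hk : 3 ≤ k) (hr : 1 ≤ r) :
    2 ^ r * (diagRamsey r k - 1) ≤ diagRamsey r (2 * k - 1) - 1 := by
  have : NeZero r := ⟨by omega⟩
  obtain hn | hn := Nat.eq_zero_or_pos (diagRamsey r k - 1)
  · simp [hn]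
  have hbad : ¬ ramseyProp (fun _ : Fin r => k) (diagRamsey r k - 1) := fun h =>
    Nat.notMem_of_lt_sInf (s := {N | 0 < N ∧ ramseyProp (fun _ : Fin r => k) N})
      (show diagRamsey r k - 1 < diagRamsey r k by omega) ⟨hn, h⟩
  by_contra! hlt
  refine hbad fun c => ?_
  obtain ⟨i, S, hS, hc⟩ :=
    (ramseyProp_multiRamsey fun _ : Fin r => 2 * k - 1).exists_monochromatic
      (V := (Fin r → Bool) × Fin (diagRamsey r k - 1))
      (by
        simp only [Fintype.card_prod, Fintype.card_pi, Fintype.card_bool, Finset.prod_const,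
          Finset.card_univ, Fintype.card_fin]
        change diagRamsey r (2 * k - 1) ≤ _
        omega)
      (cubeColoring c)
  exact ⟨i, exists_monochromatic_of_cubeColoring c i S hS.ge hc⟩
end

section
/- If DC holds, then either L_k is finite for every integer k ≥ 3, or L_k = +∞ for every integer k ≥ 3. -/
open Filter Topology
open scoped ENNReal

/-- Finite Ramsey theorem: a large enough set of vertices contains, for some color `i`,
`k i` vertices spanning only edges of color `i`. -/
theorem exists_card_forall_monochromatic {r : ℕ} (k : Fin r → ℕ) :
    ∃ N : ℕ, ∀ (V : Type) (c : Sym2 V → Fin r) (A : Finset V), N ≤ A.card →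
      ∃ i : Fin r, ∃ S ⊆ A, S.card = k i ∧ ∀ u ∈ S, ∀ v ∈ S, u ≠ v → c s(u, v) = i := by
  classical
  induction hn : ∑ i, k i using Nat.strong_induction_on generalizing k with
  | _ n ih =>
  by_cases h0 : ∃ i, k i = 0
  · obtain ⟨i, hi⟩ := h0
    exact ⟨0, fun V c A _ => ⟨i, ∅, by simp, by simp [hi], by simp⟩⟩
  push Not at h0
  have hlt : ∀ i, ∑ j, Function.update k i (k i - 1) j < n := by
    intro i
    rw [← hn]
    refine Finset.sum_lt_sum (fun j _ => ?_) ⟨i, Finset.mem_univ _, ?_⟩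
    · by_cases hj : j = i
      · subst hj; simp
      · simp [hj]
    · have := h0 i
      simp only [Function.update_self]
      omega
  choose M hM using fun i => ih _ (hlt i) (Function.update k i (k i - 1)) rfl
  refine ⟨1 + ∑ i, M i, fun V c A hA => ?_⟩
  obtain ⟨v, hv⟩ : A.Nonempty := Finset.card_pos.1 (by omega)
  obtain ⟨i, hi⟩ : ∃ i, M i ≤ ((A.erase v).filter fun u => c s(v, u) = i).card := by
    by_contra! hcon
    have hsum := Finset.card_eq_sum_card_fiberwise (f := fun u => c s(v, u)) (s := A.erase v)
      (t := Finset.univ) (by simp)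
    have hle : ∑ i, ((A.erase v).filter fun u => c s(v, u) = i).card < ∑ i, M i :=
      Finset.sum_lt_sum_of_nonempty ⟨c s(v, v), Finset.mem_univ _⟩ fun i _ => hcon i
    have := Finset.card_erase_of_mem hv
    omega
  obtain ⟨j, S, hSA, hcard, hS⟩ := hM i V c _ hi
  have hSA' : S ⊆ A := fun u hu =>
    Finset.mem_of_mem_erase (Finset.mem_filter.1 (hSA hu)).1
  by_cases hj : j = i
  · subst hj
    have hvS : v ∉ S := fun h => by simpa using hSA h
    have hvc : ∀ u ∈ S, c s(v, u) = j := fun u hu => (Finset.mem_filter.1 (hSA hu)).2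
    refine ⟨j, insert v S, Finset.insert_subset hv hSA', ?_, ?_⟩
    · rw [Finset.card_insert_of_notMem hvS, hcard, Function.update_self]
      have := h0 j
      omega
    · intro u hu w hw huw
      rcases Finset.mem_insert.1 hu with rfl | huS
      · rcases Finset.mem_insert.1 hw with rfl | hw
        · exact absurd rfl huw
        · exact hvc w hw
      · rcases Finset.mem_insert.1 hw with rfl | hw
        · rw [Sym2.eq_swap]
          exact hvc u huS
        · exact hS u huS w hw huw
  · exact ⟨j, S, hSA', by simpa [hj] using hcard, hS⟩

theorem exists_ramseyProp {r : ℕ} (k : Fin r → ℕ) : {N | 0 < N ∧ ramseyProp k N}.Nonempty := by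
  obtain ⟨N, hN⟩ := exists_card_forall_monochromatic k
  refine ⟨N + 1, N.succ_pos, fun c => ?_⟩
  obtain ⟨i, S, -, hcard, hS⟩ := hN _ c Finset.univ (by simp)
  exact ⟨i, S, hcard, hS⟩

theorem multiRamsey_le_of_imp {r s : ℕ} {k : Fin r → ℕ} {l : Fin s → ℕ}
    (h : ∀ N, ramseyProp l N → ramseyProp k N) : multiRamsey k ≤ multiRamsey l :=
  csInf_le_csInf (OrderBot.bddBelow _) (exists_ramseyProp l) fun N hN => ⟨hN.1, h N hN.2⟩

theorem multiRamsey_mono {r : ℕ} {k l : Fin r → ℕ} (h : ∀ i, k i ≤ l i) :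
    multiRamsey k ≤ multiRamsey l := by
  refine multiRamsey_le_of_imp fun N hN c => ?_
  obtain ⟨i, S, hcard, hS⟩ := hN c
  obtain ⟨T, hTS, hT⟩ := Finset.exists_subset_card_eq (hcard ▸ h i)
  exact ⟨i, T, hT, fun u hu v hv => hS u (hTS hu) v (hTS hv)⟩

/-- Colors that occur in `l` with parameter at least two may be dropped. -/
theorem multiRamsey_comp_le {r s : ℕ} (f : Fin r → Fin s) (hf : Function.Injective f)
    (l : Fin s → ℕ) (hl : ∀ i ∉ Set.range f, 2 ≤ l i) :
    multiRamsey (fun i => l (f i)) ≤ multiRamsey l := by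
  refine multiRamsey_le_of_imp fun N hN c => ?_
  obtain ⟨j, S, hcard, hS⟩ := hN fun e => f (c e)
  by_cases hj : j ∈ Set.range f
  · obtain ⟨i, rfl⟩ := hj
    exact ⟨i, S, hcard, fun u hu v hv huv => hf (hS u hu v hv huv)⟩
  · obtain ⟨u, hu, v, hv, huv⟩ := Finset.one_lt_card.1 (by have := hl j hj; omega : 1 < S.card)
    exact absurd ⟨_, hS u hu v hv huv⟩ hj

/-- The tuple on `m + m` colors obtained from `(3, …, 3, k, …, k)` by trading `s` times
a pair `(3, k)` for `(2, k + 1)`. -/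
def tradedTuple (m k s : ℕ) (l : Fin (m + m)) : ℕ :=
  if (l : ℕ) < s then 2 else if (l : ℕ) < m then 3 else if (l : ℕ) < m + s then k + 1 else k

theorem multiRamsey_tradedTuple_le (hDC : DC) {m k : ℕ} (hk : 3 ≤ k) {s : ℕ} (hs : s ≤ m) :
    multiRamsey (tradedTuple m k s) ≤ multiRamsey (tradedTuple m k 0) := by
  induction s with
  | zero => exact le_rfl
  | succ s ih =>
    refine le_trans (le_of_eq_of_le (congrArg multiRamsey ?_)
      (hDC (m + m) (by omega) (tradedTuple m k s) ?_ ⟨s, by omega⟩ ⟨m + s, by omega⟩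
        ?_ ?_ ?_)) (ih (by omega))
    · funext l
      simp only [tradedTuple, Fin.ext_iff]
      grind
    · intro l
      simp only [tradedTuple]
      grind
    · simp only [ne_eq, Fin.mk.injEq]
      omega
    · simp only [tradedTuple]
      grind
    · simp only [tradedTuple]
      grind

theorem diagRamsey_succ_le (hDC : DC) (m : ℕ) {k : ℕ} (hk : 3 ≤ k) :
    diagRamsey m (k + 1) ≤ diagRamsey (m + m) k := by
  have hcomp := multiRamsey_comp_le (Fin.natAdd m) (Fin.natAdd_injective m m)
    (tradedTuple m k m) fun i _ => by simp only [tradedTuple]; grind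
  have hsub : (fun i : Fin m => tradedTuple m k m (Fin.natAdd m i)) = fun _ => k + 1 := by
    funext i
    have := i.isLt
    simp only [tradedTuple, Fin.val_natAdd]
    grind
  rw [hsub] at hcomp
  refine hcomp.trans ((multiRamsey_tradedTuple_le hDC hk le_rfl).trans (multiRamsey_mono ?_))
  intro i
  simp only [tradedTuple]
  grind

/-- if DC holds, then either `L_k` is finite for every `k ≥ 3`, or
`L_k = +∞` for every `k ≥ 3`, where `L j` is the limit of `r ↦ R_r(j)^{1/r}`
in `[0, ∞]`. -/
theorem stmt13 (hDC : DC) (L : ℕ → ℝ≥0∞)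
    (hL : ∀ j, 2 ≤ j →
      Tendsto (fun r : ℕ => ((diagRamsey r j : ℝ≥0∞)) ^ (1 / (r : ℝ))) atTop (𝓝 (L j))) :
    (∀ k, 3 ≤ k → L k ≠ ⊤) ∨ (∀ k, 3 ≤ k → L k = ⊤) := by
  have hmono : ∀ k, 3 ≤ k → L 3 ≤ L k := fun k hk =>
    le_of_tendsto_of_tendsto' (hL 3 (by omega)) (hL k (by omega)) fun r =>
      ENNReal.rpow_le_rpow (Nat.cast_le.2 (multiRamsey_mono fun _ => hk)) (by positivity)
  have hstep : ∀ k, 3 ≤ k → L (k + 1) ≤ L k ^ 2 := by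
    intro k hk
    have hdouble : Tendsto (fun m : ℕ => m + m) atTop atTop :=
      tendsto_atTop_mono (fun m => Nat.le_add_left m m) tendsto_id
    refine le_of_tendsto_of_tendsto' (hL (k + 1) (by omega))
      (((ENNReal.continuous_pow 2).tendsto _).comp ((hL k (by omega)).comp hdouble)) fun m => ?_
    have hexp : (1 / ((m + m : ℕ) : ℝ)) * (2 : ℕ) = 1 / (m : ℝ) := by
      rcases eq_or_ne m 0 with rfl | hm
      · simp
      · push_cast
        field_simp
        ring
    simp only [Function.comp_apply]
    rw [← ENNReal.rpow_natCast, ← ENNReal.rpow_mul, hexp]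
    exact ENNReal.rpow_le_rpow (Nat.cast_le.2 (diagRamsey_succ_le hDC m hk)) (by positivity)
  by_cases h3 : L 3 = ⊤
  · exact Or.inr fun k hk => top_le_iff.1 (h3 ▸ hmono k hk)
  · refine Or.inl fun k hk => ?_
    induction k, hk using Nat.le_induction with
    | base => exact h3
    | succ k hk ih => exact ne_top_of_le_ne_top (ENNReal.pow_ne_top ih) (hstep k hk)
end
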